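/- For every integer sequence (p_1,…,p_n) with 0 ≤ p_i ≤ 2(i−1), the number of tiles of DTS(p_1,…,p_n) equals the nesting number of the perfect matching match(p_1,…,p_n), which also equals the number of inversions of the min-word of match(p_1,…,p_n): tiles(DTS(p_1,…,p_n)) = nestings(match(p_1,…,p_n)) = inv(min-word(match(p_1,…,p_n))). -/

import Mathlib

open Finset

noncomputable section

/-- A Dyck path of order `n`: a word of `2n` steps (`true` = up-step `(+1,+1)`,
`false` = down-step `(+1,-1)`) from `(-n,0)` to `(n,0)` staying weakly above the x-axis. -/
structure DyckPath (n : ℕ) where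
  step : Fin (2 * n) → Bool
  balanced : (Finset.univ.filter fun i => step i = true).card = n
  nonneg : ∀ k : ℕ, k ≤ 2 * n →
    (Finset.univ.filter fun i : Fin (2 * n) => (i : ℕ) < k ∧ step i = false).card ≤
      (Finset.univ.filter fun i : Fin (2 * n) => (i : ℕ) < k ∧ step i = true).card

namespace DyckPath

/-- Height of the path above column `x` (columns run from `-n` to `n`). -/
def ht {n : ℕ} (P : DyckPath n) (x : ℤ) : ℤ :=
  ((Finset.univ.filter fun i : Fin (2 * n) => ((i : ℕ) : ℤ) < x + n ∧ P.step i = true).card : ℤ) -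
    ((Finset.univ.filter fun i : Fin (2 * n) => ((i : ℕ) : ℤ) < x + n ∧ P.step i = false).card : ℤ)

/-- Height of the path at lattice point number `k`, `0 ≤ k ≤ 2n`
(point `k` lies at column `k - n`). -/
def pt {n : ℕ} (P : DyckPath n) (k : ℕ) : ℤ := P.ht ((k : ℤ) - n)

end DyckPath

/-- `IsChord P p q`: the up-step at (0-indexed) position `p` matches the down-step at
position `q`, forming a chord of `P`. -/
def IsChord {n : ℕ} (P : DyckPath n) (p q : ℕ) : Prop :=
  p < q ∧ q < 2 * n ∧
    (∃ hp : p < 2 * n, P.step ⟨p, hp⟩ = true) ∧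
    (∃ hq : q < 2 * n, P.step ⟨q, hq⟩ = false) ∧
    P.pt (q + 1) = P.pt p ∧
    ∀ m : ℕ, p < m → m ≤ q → P.pt p < P.pt m

/-- A natural labeling of the chord poset of `P`: the chord labeled `i` has its up-step at
(0-indexed) position `l i` and matching down-step at position `r i`; distinct labels name
distinct chords; and if one chord is nested inside another it receives a larger label. -/
structure ChordLabeling {n : ℕ} (P : DyckPath n) where
  l : Fin n → ℕ
  r : Fin n → ℕ
  chord : ∀ i, IsChord P (l i) (r i)
  inj : Function.Injective l
  natural : ∀ i j : Fin n, l j < l i → r i < r j → j < i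

/-- The length of the chord labeled `i`: the number of up steps of `P` between and
including its two endpoints. -/
def chordLen {n : ℕ} {P : DyckPath n} (C : ChordLabeling P) (i : Fin n) : ℕ :=
  (Finset.univ.filter fun m : Fin (2 * n) =>
    C.l i ≤ (m : ℕ) ∧ (m : ℕ) ≤ C.r i ∧ P.step m = true).card

/-- The growth sequence `p_1, …, p_n` associated with a natural chord labeling:
`p i = #{j<i : l j < l i} + #{j<i : r j < l i}`. -/
def seqOf {n : ℕ} {P : DyckPath n} (C : ChordLabeling P) (i : Fin n) : ℕ :=
  (Finset.univ.filter fun j : Fin n => j < i ∧ C.l j < C.l i).card +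
    (Finset.univ.filter fun j : Fin n => j < i ∧ C.r j < C.l i).card

/-- `σ` is the standardization of the word `w` (with distinct letters). -/
def IsStandardization {n : ℕ} (w : Fin n → ℕ) (σ : Equiv.Perm (Fin n)) : Prop :=
  ∀ i j : Fin n, σ i < σ j ↔ w i < w j

/-- `σ ∈ 𝓛(P_λ)`: σ is `L₀ ∘ L⁻¹` for some natural labeling `L` of the chord poset,
equivalently the standardization of the word of left endpoints of a natural labeling. -/
def LinExt {n : ℕ} (P : DyckPath n) (σ : Equiv.Perm (Fin n)) : Prop :=
  ∃ C : ChordLabeling P, IsStandardization C.l σ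

/-- Successor index in `Fin n` (used only under the guard `i+1 < n`). -/
def nextIdx {n : ℕ} (i : Fin n) : Fin n := ⟨((i : ℕ) + 1) % n, Nat.mod_lt _ i.pos⟩

/-- Descent set of a word: positions `i` with `i+1 < n` and `w i > w (i+1)`. -/
def descentFinset {n : ℕ} (w : Fin n → ℕ) : Finset (Fin n) :=
  Finset.univ.filter fun i => (i : ℕ) + 1 < n ∧ w (nextIdx i) < w i

/-- Number of inversions of a word. -/
def wordInv {n : ℕ} (w : Fin n → ℕ) : ℕ :=
  (Finset.univ.filter fun p : Fin n × Fin n => p.1 < p.2 ∧ w p.2 < w p.1).card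

/-- The word of values of a permutation. -/
def permWord {n : ℕ} (σ : Equiv.Perm (Fin n)) : Fin n → ℕ := fun i => (σ i : ℕ)

/-- inv(σ). -/
def permInv {n : ℕ} (σ : Equiv.Perm (Fin n)) : ℕ := wordInv (permWord σ)

/-- des(σ). -/
def permDes {n : ℕ} (σ : Equiv.Perm (Fin n)) : ℕ := (descentFinset (permWord σ)).card

/-- `REM_i(w) = {k > i : w i > w k > w (i+1)}`, the right embraced numbers. -/
def remSet {n : ℕ} (w : Fin n → ℕ) (i : Fin n) : Finset (Fin n) :=
  Finset.univ.filter fun k => i < k ∧ w (nextIdx i) < w k ∧ w k < w i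

/-- desdif(σ) = Σ_{i ∈ DES σ} (σ i − σ (i+1)). -/
def desdif {n : ℕ} (σ : Equiv.Perm (Fin n)) : ℕ :=
  ∑ i ∈ descentFinset (permWord σ), (permWord σ i - permWord σ (nextIdx i))

/-- res(σ) = Σ_{i ∈ DES σ} #{k < i : σ i > σ k > σ (i+1)}. -/
def resStat {n : ℕ} (σ : Equiv.Perm (Fin n)) : ℕ :=
  ∑ i ∈ descentFinset (permWord σ),
    (Finset.univ.filter fun k : Fin n =>
      k < i ∧ permWord σ (nextIdx i) < permWord σ k ∧ permWord σ k < permWord σ i).card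

/-- The Mahonian statistic mad(σ) = desdif(σ) + res(σ). -/
def mad {n : ℕ} (σ : Equiv.Perm (Fin n)) : ℕ := desdif σ + resStat σ

/-- σ avoids the pattern 231. -/
def Avoids231 {n : ℕ} (σ : Equiv.Perm (Fin n)) : Prop :=
  ¬∃ i j k : Fin n, i < j ∧ j < k ∧ σ k < σ i ∧ σ i < σ j

/-- The boxes of the skew shape `lam/mu` (with `mu` weakly above `lam`), each box
recorded by its bottom corner (a lattice point `(x, z)` with `z ≡ x + n (mod 2)`). -/
def skewCells {n : ℕ} (lam mu : DyckPath n) : Finset (ℤ × ℤ) :=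
  ((Finset.Icc (-(n : ℤ)) n) ×ˢ (Finset.Icc (0 : ℤ) n)).filter fun c =>
    lam.ht c.1 ≤ c.2 ∧ c.2 + 2 ≤ mu.ht c.1 ∧ (c.2 - c.1 - n) % 2 = 0

/-- A Dyck tile, recorded by the set of bottom corners of its boxes: these form
a Dyck-path shape, i.e. a ±1-step lattice path whose two ends are lowest. -/
def IsDyckTile (t : Finset (ℤ × ℤ)) : Prop :=
  ∃ (a b : ℤ) (f : ℤ → ℤ), a ≤ b ∧
    (∀ x : ℤ, a ≤ x → x < b → f (x + 1) = f x + 1 ∨ f (x + 1) = f x - 1) ∧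
    f b = f a ∧ (∀ x : ℤ, a ≤ x → x ≤ b → f a ≤ f x) ∧
    t = (Finset.Icc a b).image fun x => (x, f x)

/-- A Dyck tiling of order `n`: a tiling of the skew shape between two Dyck paths of
order `n` by Dyck tiles. -/
structure DyckTiling (n : ℕ) where
  lower : DyckPath n
  upper : DyckPath n
  below : ∀ x : ℤ, lower.ht x ≤ upper.ht x
  tiles : Finset (Finset (ℤ × ℤ))
  isDyck : ∀ t ∈ tiles, IsDyckTile t
  disj : ∀ t ∈ tiles, ∀ u ∈ tiles, t ≠ u → Disjoint t u
  cover : tiles.biUnion id = skewCells lower upper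

namespace DyckTiling

/-- Number of boxes of the skew shape. -/
def area {n : ℕ} (T : DyckTiling n) : ℕ := (skewCells T.lower T.upper).card

/-- Number of tiles. -/
def numTiles {n : ℕ} (T : DyckTiling n) : ℕ := T.tiles.card

/-- art(T) = (area(T) + tiles(T)) / 2. -/
def art {n : ℕ} (T : DyckTiling n) : ℕ := (T.area + T.numTiles) / 2

/-- dis(T): the number of step positions where the lower path steps down while the
upper path steps up. -/
def dis {n : ℕ} (T : DyckTiling n) : ℕ :=
  (Finset.univ.filter fun i : Fin (2 * n) =>
    T.lower.step i = false ∧ T.upper.step i = true).card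

/-- Cover-inclusiveness: whenever a tile has a box strictly above a box of another tile,
its horizontal extent is contained in that of the other tile. -/
def CoverInclusive {n : ℕ} (T : DyckTiling n) : Prop :=
  ∀ t ∈ T.tiles, ∀ u ∈ T.tiles,
    (∃ p ∈ t, ∃ q ∈ u, (p : ℤ × ℤ).1 = (q : ℤ × ℤ).1 ∧ (q : ℤ × ℤ).2 < (p : ℤ × ℤ).2) →
    ∀ p ∈ t, ∃ y : ℤ, ((p : ℤ × ℤ).1, y) ∈ u

end DyckTiling

/-- Height function of the spread at column `s` of a Dyck path. -/
def spreadHt {n : ℕ} (P : DyckPath n) (s x : ℤ) : ℤ :=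
  if x < s then P.ht (x + 1) else if x = s then P.ht s + 1 else P.ht (x - 1)

/-- Spread of a tile at column `s`: points left of `s` move left, points right of `s`
move right, and a point at column `s` is duplicated upward. -/
def spreadTile (s : ℤ) (t : Finset (ℤ × ℤ)) : Finset (ℤ × ℤ) :=
  ((t.filter fun p => p.1 ≤ s).image fun p => (p.1 - 1, p.2)) ∪
    ((t.filter fun p => p.1 = s).image fun p => (p.1, p.2 + 1)) ∪
    ((t.filter fun p => s ≤ p.1).image fun p => (p.1 + 1, p.2))

/-- Spread of a set of tiles at column `s`. -/
def spreadTiles (s : ℤ) (ts : Finset (Finset (ℤ × ℤ))) : Finset (Finset (ℤ × ℤ)) :=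
  ts.image (spreadTile s)

/-- Column `c` is eligible for a tiling with upper-boundary height function `h` and
tile set `ts`: the upper boundary has an up step ending at column `c`, and its point at
column `c` is not the top corner of a one-box tile. -/
def EligibleCol (h : ℤ → ℤ) (ts : Finset (Finset (ℤ × ℤ))) (c : ℤ) : Prop :=
  h c = h (c - 1) + 1 ∧ ({(c, h c - 2)} : Finset (ℤ × ℤ)) ∉ ts

/-- `T'` is the result of the strip-grow map applied to `(T, s)`: spread `T` at `s` and
add a one-box tile on each up step of the (spread) upper boundary starting at a column
`≥ s` (i.e. strictly to the right of column `s`). -/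
def StripGrowRel {n : ℕ} (T : DyckTiling n) (s : ℤ) (T' : DyckTiling (n + 1)) : Prop :=
  (∀ x : ℤ, T'.lower.ht x = spreadHt T.lower s x) ∧
  (∀ x : ℤ, T'.upper.ht x =
    if s ≤ x ∧ spreadHt T.upper s (x + 1) = spreadHt T.upper s x + 1 then
      spreadHt T.upper s x + 2
    else spreadHt T.upper s x) ∧
  T'.tiles = spreadTiles s T.tiles ∪
    ((Finset.Icc s (n : ℤ)).filter fun x =>
        spreadHt T.upper s (x + 1) = spreadHt T.upper s x + 1).image
      (fun x => ({(x, spreadHt T.upper s x)} : Finset (ℤ × ℤ)))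

/-- `T'` is the result of the ribbon-grow map applied to `(T, s)`: spread `T` at `s`,
and if the special column `Q` of the spread tiling is strictly right of `s`, add a
ribbon of one-box tiles at all columns strictly between `s` and `Q`. -/
def RibbonGrowRel {n : ℕ} (T : DyckTiling n) (s : ℤ) (T' : DyckTiling (n + 1)) : Prop :=
  (∀ x : ℤ, T'.lower.ht x = spreadHt T.lower s x) ∧
  ∃ Q : ℤ,
    EligibleCol (spreadHt T.upper s) (spreadTiles s T.tiles) Q ∧
    (∀ c : ℤ, EligibleCol (spreadHt T.upper s) (spreadTiles s T.tiles) c → c ≤ Q) ∧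
    (∀ x : ℤ, T'.upper.ht x =
      if s < x ∧ x < Q then spreadHt T.upper s x + 2 else spreadHt T.upper s x) ∧
    T'.tiles = spreadTiles s T.tiles ∪
      (Finset.Ioo s Q).image (fun x => ({(x, spreadHt T.upper s x)} : Finset (ℤ × ℤ)))

/-- `s` is the special column of `T`: its rightmost eligible column. -/
def SpecialCol {n : ℕ} (T : DyckTiling n) (s : ℤ) : Prop :=
  EligibleCol T.upper.ht T.tiles s ∧ ∀ c : ℤ, EligibleCol T.upper.ht T.tiles c → c ≤ s

/-- In the strip-shrink map applied to `T'` with special column `s`, a one-box tile is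
removed at column `x`: `x` is right of `s` and there is a one-box tile there that is
part of an up step of the upper boundary. -/
def StripRemovedAt {n : ℕ} (T' : DyckTiling n) (s x : ℤ) : Prop :=
  s < x ∧ T'.upper.ht x = T'.upper.ht (x - 1) + 1 ∧
    ({(x, T'.upper.ht x - 2)} : Finset (ℤ × ℤ)) ∈ T'.tiles

instance {n : ℕ} (T' : DyckTiling n) (s x : ℤ) : Decidable (StripRemovedAt T' s x) := by
  unfold StripRemovedAt; infer_instance

/-- `(T, s)` is the result of the strip-shrink map applied to `T'`: `s` is the special
column of `T'`; all one-box tiles right of `s` lying on up steps of the upper boundary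
are removed; and the result is the spread of `T` at `s`. -/
def StripShrinkRel {n : ℕ} (T' : DyckTiling (n + 1)) (T : DyckTiling n) (s : ℤ) : Prop :=
  SpecialCol T' s ∧
  (∀ x : ℤ, spreadHt T.lower s x = T'.lower.ht x) ∧
  (∀ x : ℤ, spreadHt T.upper s x =
    if StripRemovedAt T' s x then T'.upper.ht x - 2 else T'.upper.ht x) ∧
  spreadTiles s T.tiles =
    T'.tiles \ (((Finset.Ioc s ((n : ℤ) + 1)).filter fun x => StripRemovedAt T' s x).image
      fun x => ({(x, T'.upper.ht x - 2)} : Finset (ℤ × ℤ)))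

/-- `(T, s)` is the result of the ribbon-shrink map applied to `T'`: `s` is the special
column of `T'`; the maximal run of topmost one-box tiles in columns `s+1, s+2, …` is
removed; and the result is the spread of `T` at `s`. -/
def RibbonShrinkRel {n : ℕ} (T' : DyckTiling (n + 1)) (T : DyckTiling n) (s : ℤ) : Prop :=
  SpecialCol T' s ∧
  ∃ r : ℤ, s < r ∧
    (∀ x : ℤ, s < x → x < r → ({(x, T'.upper.ht x - 2)} : Finset (ℤ × ℤ)) ∈ T'.tiles) ∧
    ({(r, T'.upper.ht r - 2)} : Finset (ℤ × ℤ)) ∉ T'.tiles ∧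
    (∀ x : ℤ, spreadHt T.lower s x = T'.lower.ht x) ∧
    (∀ x : ℤ, spreadHt T.upper s x =
      if s < x ∧ x < r then T'.upper.ht x - 2 else T'.upper.ht x) ∧
    spreadTiles s T.tiles =
      T'.tiles \ ((Finset.Ioo s r).image fun x => ({(x, T'.upper.ht x - 2)} : Finset (ℤ × ℤ)))

/-- `IsDTS n p T`: `T` is the Dyck tiling `DTS(p_1, …, p_n)` (indices 0-based, so the
growth column for step `i` is `p i - i`). -/
inductive IsDTS : (n : ℕ) → (Fin n → ℕ) → DyckTiling n → Prop where
  | nil (p : Fin 0 → ℕ) (T : DyckTiling 0) : IsDTS 0 p T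
  | cons (n : ℕ) (p : Fin (n + 1) → ℕ) (T : DyckTiling n) (T' : DyckTiling (n + 1)) :
      IsDTS n (fun i => p i.castSucc) T →
      StripGrowRel T ((p (Fin.last n) : ℤ) - n) T' → IsDTS (n + 1) p T'

/-- `IsDTR n p T`: `T` is the Dyck tiling `DTR(p_1, …, p_n)`. -/
inductive IsDTR : (n : ℕ) → (Fin n → ℕ) → DyckTiling n → Prop where
  | nil (p : Fin 0 → ℕ) (T : DyckTiling 0) : IsDTR 0 p T
  | cons (n : ℕ) (p : Fin (n + 1) → ℕ) (T : DyckTiling n) (T' : DyckTiling (n + 1)) :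
      IsDTR n (fun i => p i.castSucc) T →
      RibbonGrowRel T ((p (Fin.last n) : ℤ) - n) T' → IsDTR (n + 1) p T'

/-- `T = DTS(λ, σ)`. -/
def IsDTSof {n : ℕ} (lam : DyckPath n) (σ : Equiv.Perm (Fin n)) (T : DyckTiling n) : Prop :=
  ∃ C : ChordLabeling lam, IsStandardization C.l σ ∧ IsDTS n (seqOf C) T

/-- `T = DTR(λ, σ)`. -/
def IsDTRof {n : ℕ} (lam : DyckPath n) (σ : Equiv.Perm (Fin n)) (T : DyckTiling n) : Prop :=
  ∃ C : ChordLabeling lam, IsStandardization C.l σ ∧ IsDTR n (seqOf C) T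

/-- Increment `a` if it exceeds `p`. -/
def bump (p a : ℕ) : ℕ := if p < a then a + 1 else a

/-- The perfect matching `match(p_1, …, p_n)` of `{1, …, 2n}`. -/
def matchSeq : (n : ℕ) → (Fin n → ℕ) → Finset (ℕ × ℕ)
  | 0, _ => ∅
  | n + 1, p =>
    ((matchSeq n fun i => p i.castSucc).image fun q =>
      (bump (p (Fin.last n)) q.1, bump (p (Fin.last n)) q.2)) ∪
      {(p (Fin.last n) + 1, 2 * (n + 1))}

/-- The number of nestings of a matching: pairs `(a,b)`, `(c,d)` with `c < a < b < d`. -/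
def nestings (M : Finset (ℕ × ℕ)) : ℕ :=
  ((M ×ˢ M).filter fun q => q.2.1 < q.1.1 ∧ q.1.1 < q.1.2 ∧ q.1.2 < q.2.2).card

/-- `w` is the min-word of `M`: the list of the smaller elements of the pairs of `M`,
sorted by the larger elements. -/
def IsMinWord (n : ℕ) (M : Finset (ℕ × ℕ)) (w : Fin n → ℕ) : Prop :=
  ∃ b : Fin n → ℕ, StrictMono b ∧ (∀ i, w i < b i) ∧
    M = Finset.univ.image fun i => (w i, b i)

/-- The number of tiles of `T` containing boxes over both endpoint columns of the
chord with endpoints at step positions `p < q`. -/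
def chordTileCount {n : ℕ} (T : DyckTiling n) (p q : ℕ) : ℕ :=
  (T.tiles.filter fun t =>
    (∃ c ∈ t, (c : ℤ × ℤ).1 = (p : ℤ) + 1 - n) ∧ (∃ c ∈ t, (c : ℤ × ℤ).1 = (q : ℤ) - n)).card

/-- A Dyck tableau of order `n` over the zigzag path `Z` of order `n+1`: a skew shape
`Z/μ` with `n` dots, one in each column of the skew shape through a valley of `Z`. -/
structure DyckTableau (n : ℕ) (Z : DyckPath (n + 1)) where
  upper : DyckPath (n + 1)
  below : ∀ x : ℤ, Z.ht x ≤ upper.ht x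
  dots : Finset (ℤ × ℤ)
  sub : dots ⊆ skewCells Z upper
  card_dots : dots.card = n
  valley : ∀ x : ℤ, Z.ht (x - 1) = Z.ht x + 1 → Z.ht (x + 1) = Z.ht x + 1 →
    (dots.filter fun c => c.1 = x).card = 1

/-- The `q`-integer `[m]_q = 1 + q + ⋯ + q^(m-1)` as a polynomial. -/
def qint (m : ℕ) : Polynomial ℤ := ∑ i ∈ Finset.range m, Polynomial.X ^ i

/-- The `q`-factorial `[n]_q!`. -/
def qfact (n : ℕ) : Polynomial ℤ := ∏ i ∈ Finset.range n, qint (i + 1)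


theorem DyckPath.ht_eq_sum {n : ℕ} (P : DyckPath n) (x : ℤ) :
    P.ht x = ∑ i : Fin (2 * n),
      if ((i : ℕ) : ℤ) < x + n then (if P.step i = true then (1 : ℤ) else -1) else 0 := by
  unfold DyckPath.ht
  rw [Finset.card_filter, Finset.card_filter]
  push_cast
  rw [← Finset.sum_sub_distrib]
  refine Finset.sum_congr rfl fun i _ => ?_
  cases P.step i <;> by_cases h : ((i : ℕ) : ℤ) < x + n <;> simp [h]

theorem DyckPath.ht_succ_sub {n : ℕ} (P : DyckPath n) (x : ℤ) :
    P.ht (x + 1) - P.ht x = ∑ i : Fin (2 * n),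
      if ((i : ℕ) : ℤ) = x + n then (if P.step i = true then (1 : ℤ) else -1) else 0 := by
  rw [P.ht_eq_sum, P.ht_eq_sum, ← Finset.sum_sub_distrib]
  refine Finset.sum_congr rfl fun i _ => ?_
  split_ifs <;> omega

/-- Inside its range, a Dyck path moves by `±1` at every step. -/
theorem DyckPath.ht_succ {n : ℕ} (P : DyckPath n) {x : ℤ} (h₁ : -(n : ℤ) ≤ x) (h₂ : x < n) :
    P.ht (x + 1) = P.ht x + 1 ∨ P.ht (x + 1) = P.ht x - 1 := by
  obtain ⟨k, hk⟩ : ∃ k : Fin (2 * n), ((k : ℕ) : ℤ) = x + n :=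
    ⟨⟨(x + n).toNat, by omega⟩, by simp; omega⟩
  have h := P.ht_succ_sub x
  rw [Finset.sum_eq_single k] at h
  · rw [if_pos hk] at h
    split_ifs at h <;> omega
  · intro i _ hi
    rw [if_neg]
    intro h'
    exact hi (Fin.ext (by omega))
  · simp

/-- Outside its range, a Dyck path is flat. -/
theorem DyckPath.ht_succ_of_not_mem {n : ℕ} (P : DyckPath n) {x : ℤ}
    (h : x < -(n : ℤ) ∨ (n : ℤ) ≤ x) : P.ht (x + 1) = P.ht x := by
  have h' := P.ht_succ_sub x
  rw [Finset.sum_eq_zero] at h'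
  · omega
  · intro i _
    have := i.isLt
    rw [if_neg (by omega)]

theorem mem_spreadTile {s : ℤ} {t : Finset (ℤ × ℤ)} {x y : ℤ} :
    (x, y) ∈ spreadTile s t ↔ (x < s ∧ (x + 1, y) ∈ t) ∨ (x = s ∧ (x, y - 1) ∈ t) ∨
      (s < x ∧ (x - 1, y) ∈ t) := by
  simp only [spreadTile, mem_union, mem_image, mem_filter, Prod.exists, Prod.mk.injEq]
  constructor
  · rintro ((⟨a, b, ⟨h, h'⟩, rfl, rfl⟩ | ⟨a, b, ⟨h, h'⟩, rfl, rfl⟩) | ⟨a, b, ⟨h, h'⟩, rfl, rfl⟩)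
    · exact Or.inl ⟨by omega, by simpa using h⟩
    · exact Or.inr (Or.inl ⟨h', by simpa using h⟩)
    · exact Or.inr (Or.inr ⟨by omega, by simpa using h⟩)
  · rintro (⟨h, h'⟩ | ⟨h, h'⟩ | ⟨h, h'⟩)
    · exact Or.inl (Or.inl ⟨x + 1, y, ⟨h', by omega⟩, by omega, rfl⟩)
    · exact Or.inl (Or.inr ⟨x, y - 1, ⟨h', h⟩, rfl, by omega⟩)
    · exact Or.inr ⟨x - 1, y, ⟨h', by omega⟩, by omega, rfl⟩

theorem spreadTile_injective (s : ℤ) : Function.Injective (spreadTile s) := by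
  intro t u h
  ext ⟨x, y⟩
  rcases le_or_gt x s with hx | hx
  · have := congrArg (fun v => (x - 1, y) ∈ v) h
    have h₁ : x - 1 < s := by omega
    have h₂ : ¬x - 1 = s := by omega
    have h₃ : ¬s < x - 1 := by omega
    simpa [mem_spreadTile, h₁, h₂, h₃] using this
  · have := congrArg (fun v => (x + 1, y) ∈ v) h
    have h₁ : ¬x + 1 < s := by omega
    have h₂ : ¬x + 1 = s := by omega
    have h₃ : s < x + 1 := by omega
    simpa [mem_spreadTile, h₁, h₂, h₃] using this

/-- The boxes of a spread tiling lie below its spread upper boundary. -/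
theorem DyckTiling.add_two_le_spreadHt {n : ℕ} (T : DyckTiling n) {s x y : ℤ}
    {t : Finset (ℤ × ℤ)} (ht : t ∈ T.tiles) (h : (x, y) ∈ spreadTile s t) :
    y + 2 ≤ spreadHt T.upper s x := by
  have key : ∀ a b : ℤ, (a, b) ∈ t → b + 2 ≤ T.upper.ht a := by
    intro a b hab
    have hmem : (a, b) ∈ skewCells T.lower T.upper := by
      rw [← T.cover]
      exact mem_biUnion.mpr ⟨t, ht, hab⟩
    simp only [skewCells, mem_filter] at hmem
    exact hmem.2.2.1
  unfold spreadHt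
  rcases mem_spreadTile.mp h with ⟨h₁, h₂⟩ | ⟨h₁, h₂⟩ | ⟨h₁, h₂⟩
  · rw [if_pos h₁]
    exact key _ _ h₂
  · rw [if_neg (by omega), if_pos h₁]
    have := key _ _ h₂
    rw [h₁] at this
    omega
  · rw [if_neg (by omega), if_neg (by omega)]
    exact key _ _ h₂

/-- The columns at which the strip-grow map adds a one-box tile. -/
def stripCols {n : ℕ} (P : DyckPath n) (s : ℤ) : Finset ℤ :=
  (Finset.Icc s (n : ℤ)).filter fun x => spreadHt P s (x + 1) = spreadHt P s x + 1

theorem StripGrowRel.numTiles_eq {n : ℕ} {T : DyckTiling n} {s : ℤ} {T' : DyckTiling (n + 1)}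
    (h : StripGrowRel T s T') : T'.numTiles = T.numTiles + (stripCols T.upper s).card := by
  unfold DyckTiling.numTiles
  rw [h.2.2, card_union_of_disjoint, spreadTiles, card_image_of_injective _ (spreadTile_injective s),
    card_image_of_injOn, stripCols]
  · intro x _ y _ hxy
    have := Finset.singleton_injective hxy
    exact congrArg Prod.fst this
  · rw [Finset.disjoint_left]
    intro t ht ht'
    obtain ⟨u, hu, rfl⟩ := mem_image.mp ht
    obtain ⟨x, _, hx⟩ := mem_image.mp ht'
    have := T.add_two_le_spreadHt hu (hx ▸ mem_singleton_self _)
    omega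

theorem bump_lt_bump {p a b : ℕ} : bump p a < bump p b ↔ a < b := by
  unfold bump
  split_ifs <;> omega

theorem bump_injective (p : ℕ) : Function.Injective (bump p) := by
  intro a b h
  unfold bump at h
  split_ifs at h <;> omega

theorem bump_prod_injective (p : ℕ) :
    Function.Injective fun q : ℕ × ℕ => (bump p q.1, bump p q.2) :=
  (bump_injective p).prodMap (bump_injective p)

/-- The pairs of `M` are increasing, have entries in `{1, …, 2n}`, and have distinct minima. -/
structure IsArcSet (n : ℕ) (M : Finset (ℕ × ℕ)) : Prop where
  pos : ∀ q ∈ M, 1 ≤ q.1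
  lt : ∀ q ∈ M, q.1 < q.2
  le : ∀ q ∈ M, q.2 ≤ 2 * n
  inj : Set.InjOn Prod.fst (M : Set (ℕ × ℕ))

/-- The effect of one step of the recursion for `matchSeq`. -/
def insertArc (n p : ℕ) (M : Finset (ℕ × ℕ)) : Finset (ℕ × ℕ) :=
  (M.image fun q => (bump p q.1, bump p q.2)) ∪ {(p + 1, 2 * (n + 1))}

theorem mem_insertArc {n p : ℕ} {M : Finset (ℕ × ℕ)} {q : ℕ × ℕ} :
    q ∈ insertArc n p M ↔
      (∃ r ∈ M, (bump p r.1, bump p r.2) = q) ∨ q = (p + 1, 2 * (n + 1)) := by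
  simp only [insertArc, mem_union, mem_image, mem_singleton]

theorem IsArcSet.insertArc {n p : ℕ} {M : Finset (ℕ × ℕ)} (hM : IsArcSet n M) (hp : p ≤ 2 * n) :
    IsArcSet (n + 1) (insertArc n p M) where
  pos := by
    intro q hq
    rcases mem_insertArc.mp hq with ⟨r, hr, rfl⟩ | rfl
    · have := hM.pos r hr
      simp only [bump]
      split_ifs <;> omega
    · simp
  lt := by
    intro q hq
    rcases mem_insertArc.mp hq with ⟨r, hr, rfl⟩ | rfl
    · exact bump_lt_bump.mpr (hM.lt r hr)
    · simp only
      omega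
  le := by
    intro q hq
    rcases mem_insertArc.mp hq with ⟨r, hr, rfl⟩ | rfl
    · have := hM.le r hr
      simp only [bump]
      split_ifs <;> omega
    · simp
  inj := by
    intro q hq q' hq' h
    rcases mem_insertArc.mp hq with ⟨r, hr, rfl⟩ | rfl <;>
      rcases mem_insertArc.mp hq' with ⟨r', hr', rfl⟩ | rfl
    · rw [hM.inj hr hr' (bump_injective p h)]
    · simp only [bump] at h
      split_ifs at h <;> omega
    · simp only [bump] at h
      split_ifs at h <;> omega
    · rfl

theorem isArcSet_matchSeq (n : ℕ) (p : Fin n → ℕ) (hp : ∀ i, p i ≤ 2 * (i : ℕ)) :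
    IsArcSet n (matchSeq n p) := by
  induction n with
  | zero => constructor <;> simp [matchSeq]
  | succ n ih =>
    exact (ih (fun i => p i.castSucc) fun i => hp i.castSucc).insertArc (hp (Fin.last n))

/-- The new pair of `insertArc` is nested over exactly the pairs whose minimum exceeds `p`. -/
theorem IsArcSet.nestings_insertArc {n p : ℕ} {M : Finset (ℕ × ℕ)} (hM : IsArcSet n M) :
    nestings (_root_.insertArc n p M) = nestings M + (M.filter fun q => p < q.1).card := by
  set β : ℕ × ℕ → ℕ × ℕ := fun q => (bump p q.1, bump p q.2) with hβ
  have hβi : Function.Injective β := bump_prod_injective p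
  have hbd : ∀ r ∈ M, bump p r.2 < 2 * (n + 1) := by
    intro r hr
    have := hM.le r hr
    unfold bump
    split_ifs <;> omega
  have hset : ((_root_.insertArc n p M ×ˢ _root_.insertArc n p M).filter
        fun q => q.2.1 < q.1.1 ∧ q.1.1 < q.1.2 ∧ q.1.2 < q.2.2) =
      ((M ×ˢ M).filter fun q => q.2.1 < q.1.1 ∧ q.1.1 < q.1.2 ∧ q.1.2 < q.2.2).image
        (Prod.map β β) ∪
      (M.filter fun q => p < q.1).image fun q => (β q, (p + 1, 2 * (n + 1))) := by
    ext ⟨q, q'⟩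
    simp only [mem_filter, mem_product, mem_union, mem_image, Prod.exists, Prod.map_apply,
      Prod.mk.injEq]
    constructor
    · rintro ⟨⟨hq, hq'⟩, h₁, h₂, h₃⟩
      rcases mem_insertArc.mp hq with ⟨⟨a, b⟩, hr, rfl⟩ | rfl <;>
        rcases mem_insertArc.mp hq' with ⟨⟨c, d⟩, hr', rfl⟩ | rfl
      · exact Or.inl ⟨a, b, c, d, ⟨⟨hr, hr'⟩, bump_lt_bump.mp h₁, bump_lt_bump.mp h₂,
          bump_lt_bump.mp h₃⟩, rfl, rfl⟩
      · refine Or.inr ⟨a, b, ⟨hr, ?_⟩, rfl, rfl⟩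
        simp only [bump] at h₁
        split_ifs at h₁ <;> omega
      · have := hbd _ hr'
        simp only at h₃ this
        omega
      · simp at h₁
    · rintro (⟨a, b, c, d, ⟨⟨hr, hr'⟩, h₁, h₂, h₃⟩, rfl, rfl⟩ | ⟨a, b, ⟨hr, h⟩, rfl, rfl⟩)
      · exact ⟨⟨mem_insertArc.mpr (Or.inl ⟨_, hr, rfl⟩), mem_insertArc.mpr (Or.inl ⟨_, hr', rfl⟩)⟩,
          bump_lt_bump.mpr h₁, bump_lt_bump.mpr h₂, bump_lt_bump.mpr h₃⟩
      · refine ⟨⟨mem_insertArc.mpr (Or.inl ⟨_, hr, rfl⟩), mem_insertArc.mpr (Or.inr rfl)⟩, ?_,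
          bump_lt_bump.mpr (hM.lt _ hr), hbd _ hr⟩
        simp only [hβ, bump, if_pos h]
        omega
  unfold nestings
  rw [hset, card_union_of_disjoint, card_image_of_injective _ (hβi.prodMap hβi),
    card_image_of_injective]
  · intro q q' h
    exact hβi (congrArg Prod.fst h)
  · rw [Finset.disjoint_left]
    intro x hx hx'
    obtain ⟨q, -, rfl⟩ := mem_image.mp hx
    obtain ⟨q', -, h⟩ := mem_image.mp hx'
    have := congrArg (fun z => z.2.1) h
    simp only [hβ, Prod.map, bump] at this
    split_ifs at this <;> omega

/-- The up steps of `P` are at the positions of the minima of the pairs of `M`. -/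
def UpStepsAt {n : ℕ} (P : DyckPath n) (M : Finset (ℕ × ℕ)) : Prop :=
  ∀ x : ℤ, P.ht (x + 1) = P.ht x + 1 ↔ ∃ q ∈ M, (q.1 : ℤ) = x + n + 1

theorem spreadHt_succ_eq_iff {n : ℕ} (P : DyckPath n) {s x : ℤ} (hx : s ≤ x) :
    spreadHt P s (x + 1) = spreadHt P s x + 1 ↔ s < x ∧ P.ht x = P.ht (x - 1) + 1 := by
  rcases hx.eq_or_lt with rfl | hx
  · simp [spreadHt]
    omega
  · simp only [spreadHt]
    rw [if_neg (by omega), if_neg (by omega), if_neg (by omega), if_neg (by omega),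
      add_sub_cancel_right]
    simp [hx]

theorem UpStepsAt.card_stripCols {n p : ℕ} {P : DyckPath n} {M : Finset (ℕ × ℕ)}
    (h : UpStepsAt P M) (hM : IsArcSet n M) :
    (stripCols P ((p : ℤ) - n)).card = (M.filter fun q => p < q.1).card := by
  symm
  refine Finset.card_bij (fun q _ => (q.1 : ℤ) - n) ?_ ?_ ?_
  · intro q hq
    obtain ⟨hq, hpq⟩ := mem_filter.mp hq
    have h₁ := hM.lt q hq
    have h₂ := hM.le q hq
    refine mem_filter.mpr ⟨mem_Icc.mpr ⟨by omega, by omega⟩, ?_⟩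
    rw [spreadHt_succ_eq_iff P (by omega)]
    refine ⟨by omega, ?_⟩
    have := (h ((q.1 : ℤ) - n - 1)).mpr ⟨q, hq, by ring⟩
    rwa [sub_add_cancel] at this
  · intro q hq q' hq' hqq
    exact hM.inj (mem_filter.mp hq).1 (mem_filter.mp hq').1 (by simpa using hqq)
  · intro x hx
    obtain ⟨hx, hup⟩ := mem_filter.mp hx
    obtain ⟨hx₁, hx₂⟩ := mem_Icc.mp hx
    rw [spreadHt_succ_eq_iff P hx₁] at hup
    obtain ⟨q, hq, hqx⟩ := (h (x - 1)).mp (by rw [sub_add_cancel]; exact hup.2)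
    exact ⟨q, mem_filter.mpr ⟨hq, by omega⟩, by omega⟩

theorem StripGrowRel.upStepsAt {n p : ℕ} {T : DyckTiling n} {T' : DyckTiling (n + 1)}
    {M : Finset (ℕ × ℕ)} (h : UpStepsAt T.upper M)
    (hT : StripGrowRel T ((p : ℤ) - n) T') : UpStepsAt T'.upper (insertArc n p M) := by
  intro x
  set s : ℤ := (p : ℤ) - n with hs
  have hins : (∃ q ∈ insertArc n p M, (q.1 : ℤ) = x + (n + 1 : ℕ) + 1) ↔
      if x + 1 < s then T.upper.ht (x + 1 + 1) = T.upper.ht (x + 1) + 1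
      else if x + 1 = s then True else T.upper.ht (x + 1) = T.upper.ht x + 1 := by
    rw [h, h]
    constructor
    · rintro ⟨q, hq, hqx⟩
      rcases mem_insertArc.mp hq with ⟨r, hr, rfl⟩ | rfl
      · simp only [bump] at hqx
        push_cast at hqx
        split_ifs at hqx ⊢ <;>
          first
          | trivial
          | exact ⟨r, hr, by omega⟩
      · simp only at hqx
        push_cast at hqx
        rw [if_neg (by omega), if_pos (by omega)]
        trivial
    · intro hq
      split_ifs at hq with h₁ h₂
      · obtain ⟨r, hr, hrx⟩ := hq
        refine ⟨_, mem_insertArc.mpr (Or.inl ⟨r, hr, rfl⟩), ?_⟩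
        simp only [bump]
        rw [if_neg (by omega)]
        push_cast
        omega
      · exact ⟨_, mem_insertArc.mpr (Or.inr rfl), by push_cast; omega⟩
      · obtain ⟨r, hr, hrx⟩ := hq
        refine ⟨_, mem_insertArc.mpr (Or.inl ⟨r, hr, rfl⟩), ?_⟩
        simp only [bump]
        rw [if_pos (by omega)]
        push_cast
        omega
  rw [hins, hT.2.1, hT.2.1]
  rcases lt_trichotomy (x + 1) s with hx | hx | hx
  · have h₁ : ¬s ≤ x := by omega
    have h₂ : ¬s ≤ x + 1 := by omega
    have h₃ : x < s := by omega
    simp [h₁, h₂, h₃, hx, spreadHt]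
  · have h₁ : ¬s ≤ x := by omega
    have h₂ : ¬x + 1 < s := by omega
    have h₃ : x < s := by omega
    have hup : ¬(s ≤ x + 1 ∧ spreadHt T.upper s (x + 1 + 1) = spreadHt T.upper s (x + 1) + 1) := by
      rw [spreadHt_succ_eq_iff _ hx.ge]
      omega
    rw [if_neg h₂, if_pos hx, if_neg hup, if_neg fun h' => h₁ h'.1]
    simp [spreadHt, hx, h₃]
  · have hsx : s ≤ x := by omega
    rw [if_neg (by omega : ¬ x + 1 < s), if_neg (by omega : ¬ x + 1 = s)]
    have hg₁ : spreadHt T.upper s (x + 1) = T.upper.ht x := by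
      rw [spreadHt, if_neg (by omega), if_neg (by omega), add_sub_cancel_right]
    have hg₂ : spreadHt T.upper s (x + 1 + 1) = T.upper.ht (x + 1) := by
      rw [spreadHt, if_neg (by omega), if_neg (by omega), add_sub_cancel_right]
    rw [hg₁, hg₂]
    rcases hsx.eq_or_lt with hsx' | hsx'
    · have hg' : spreadHt T.upper s x = T.upper.ht x + 1 := by
        rw [spreadHt, if_neg (by omega), if_pos hsx'.symm, hsx']
      rw [hg']
      split_ifs <;> omega
    · have hg' : spreadHt T.upper s x = T.upper.ht (x - 1) := by
        rw [spreadHt, if_neg (by omega), if_neg (by omega)]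
      rw [hg']
      have e : x - 1 + 1 = x := by ring
      rcases lt_or_ge (x - 1) n with hn | hn
      · have := T.upper.ht_succ (x := x - 1) (by omega) hn
        rw [e] at this
        split_ifs <;> omega
      · have h₁ := T.upper.ht_succ_of_not_mem (x := x - 1) (Or.inr hn)
        have h₂ := T.upper.ht_succ_of_not_mem (x := x) (Or.inr (by omega))
        rw [e] at h₁
        split_ifs <;> omega

theorem DyckTiling.numTiles_zero (T : DyckTiling 0) : T.numTiles = 0 := by
  unfold DyckTiling.numTiles
  rw [card_eq_zero, eq_empty_iff_forall_notMem]
  intro t ht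
  obtain ⟨a, b, f, hab, -, -, -, rfl⟩ := T.isDyck t ht
  have hmem : (a, f a) ∈ skewCells T.lower T.upper := by
    rw [← T.cover]
    exact mem_biUnion.mpr ⟨_, ht, mem_image.mpr ⟨a, by simp [hab], rfl⟩⟩
  simp only [skewCells, mem_filter, mem_product, mem_Icc] at hmem
  have h := T.upper.ht_eq_sum a
  simp only [Nat.mul_zero, univ_eq_empty, sum_empty] at h
  omega

theorem IsDTS.numTiles_eq_nestings {n : ℕ} {p : Fin n → ℕ} {T : DyckTiling n} (h : IsDTS n p T)
    (hp : ∀ i, p i ≤ 2 * (i : ℕ)) :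
    T.numTiles = nestings (matchSeq n p) ∧ UpStepsAt T.upper (matchSeq n p) := by
  induction h with
  | nil p T =>
    refine ⟨by simp [T.numTiles_zero, nestings, matchSeq], fun x => ?_⟩
    have := T.upper.ht_succ_of_not_mem (x := x) (by omega)
    simp [matchSeq, this]
  | cons n p T T' _ hT ih =>
    obtain ⟨hnum, hup⟩ := ih fun i => hp i.castSucc
    have hM := isArcSet_matchSeq n (fun i => p i.castSucc) fun i => hp i.castSucc
    change _ = nestings (insertArc n (p (Fin.last n)) (matchSeq n fun i => p i.castSucc)) ∧ _
    rw [hM.nestings_insertArc, hT.numTiles_eq, hup.card_stripCols hM, hnum]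
    exact ⟨rfl, hT.upStepsAt hup⟩

theorem IsMinWord.nestings_eq_wordInv {n : ℕ} {M : Finset (ℕ × ℕ)} {w : Fin n → ℕ}
    (h : IsMinWord n M w) : nestings M = wordInv w := by
  obtain ⟨b, hb, hwb, rfl⟩ := h
  symm
  refine Finset.card_bij (fun q _ => ((w q.1, b q.1), (w q.2, b q.2))) ?_ ?_ ?_
  · rintro ⟨i, j⟩ hij
    obtain ⟨-, hij, hw⟩ := mem_filter.mp hij
    exact mem_filter.mpr ⟨mem_product.mpr ⟨mem_image_of_mem _ (mem_univ _),
      mem_image_of_mem _ (mem_univ _)⟩, hw, hwb i, hb hij⟩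
  · rintro ⟨i, j⟩ - ⟨i', j'⟩ - hq
    simp only [Prod.mk.injEq] at hq
    rw [hb.injective hq.1.2, hb.injective hq.2.2]
  · rintro ⟨q, q'⟩ hq
    obtain ⟨hmem, h₁, -, h₃⟩ := mem_filter.mp hq
    obtain ⟨hq, hq'⟩ := mem_product.mp hmem
    obtain ⟨i, -, rfl⟩ := mem_image.mp hq
    obtain ⟨j, -, rfl⟩ := mem_image.mp hq'
    exact ⟨(i, j), mem_filter.mpr ⟨mem_univ _, hb.lt_iff_lt.mp h₃, h₁⟩, rfl⟩

/-- For every sequence `(p_1, …, p_n)` with `0 ≤ p_i ≤ 2(i-1)`,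
`tiles(DTS(p)) = nestings(match(p)) = inv(min-word(match(p)))`. -/
theorem tiles_DTS_eq_nestings (n : ℕ) (p : Fin n → ℕ) (hp : ∀ i, p i ≤ 2 * (i : ℕ)) :
    (∀ T : DyckTiling n, IsDTS n p T → T.numTiles = nestings (matchSeq n p)) ∧
    (∀ w : Fin n → ℕ, IsMinWord n (matchSeq n p) w →
      nestings (matchSeq n p) = wordInv w) :=
  ⟨fun _ hT => (hT.numTiles_eq_nestings hp).1, fun _ hw => hw.nestings_eq_wordInv⟩

end
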